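/- arXiv:2412.16273 — 3 statements merged into one kernel-verified Lean document; each statement's English description precedes it below -/
import Mathlib

section
/- Let A be a complex vector space with two bilinear operations ∘ and ∗ such that (A,∘) and (A,∗) are anti-pre-Lie algebras, and set [x,y]₁ = x∘y−y∘x, [x,y]₂ = x∗y−y∗x, L∘(x)y = x∘y, L∗(x)y = x∗y. Then (A,∘,∗) is a compatible anti-pre-Lie algebra if and only if both of the following hold: (a) (A,[-,-]₁,[-,-]₂) is a compatible Lie algebra, i.e., [[x,y]₁,z]₂ + [[y,z]₁,x]₂ + [[z,x]₁,y]₂ + [[x,y]₂,z]₁ + [[y,z]₂,x]₁ + [[z,x]₂,y]₁ = 0 for all x,y,z ∈ A; and (b) −L∘([x,y]₂) − L∗([x,y]₁) = L∘(x)L∗(y) − L∘(y)L∗(x) + L∗(x)L∘(y) − L∗(y)L∘(x) as operators on A, for all x,y ∈ A. -/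
/-- An anti-pre-Lie algebra structure. -/
def IsAntiPreLie {A : Type*} [AddCommGroup A] [Module ℂ A]
    (m : A →ₗ[ℂ] A →ₗ[ℂ] A) : Prop :=
  (∀ x y z : A, m x (m y z) - m y (m x z) = m (m y x - m x y) z) ∧
  (∀ x y z : A, m (m x y - m y x) z + m (m y z - m z y) x + m (m z x - m x z) y = 0)

/-!
The two anti-pre-Lie identities are quadratic in the product, so they hold along the whole pencil
`k₁ • c + k₂ • s` exactly when they hold for `c` and `s` and their polarizations vanish at `(c, s)`.
Polarizing the first identity gives condition (b). For products `m`, `n` with commutators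
`[-,-]ₘ`, `[-,-]ₙ`, summing the defect `m x (n y z) - m y (n x z) + m [x, y]ₙ z` of the first
identity cyclically turns its first two terms into the cyclic sum of `m z [x, y]ₙ`, so that

  `2 ∑ m [x, y]ₙ z = ∑ [[x, y]ₙ, z]ₘ + ∑ (m x (n y z) - m y (n x z) + m [x, y]ₙ z)`.

Hence, once (b) holds and `2` is cancellable, the polarized second identity is equivalent to the
mixed Jacobi identity (a).
-/

section Polarization

variable {R M N : Type*} [CommRing R] [AddCommGroup M] [AddCommGroup N] [Module R M] [Module R N]

theorem forall_bilin_smul_add_smul_self_eq_zero_iff (B : M →ₗ[R] M →ₗ[R] N) {u v : M}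
    (hu : B u u = 0) (hv : B v v = 0) :
    (∀ k₁ k₂ : R, B (k₁ • u + k₂ • v) (k₁ • u + k₂ • v) = 0) ↔ B u v + B v u = 0 := by
  have expand (k₁ k₂ : R) :
      B (k₁ • u + k₂ • v) (k₁ • u + k₂ • v) = (k₁ * k₂) • (B u v + B v u) := by
    simp only [map_add, map_smul, LinearMap.add_apply, LinearMap.smul_apply, hu, hv]
    module
  simp only [expand]
  exact ⟨fun h ↦ by simpa using h 1 1, fun h k₁ k₂ ↦ by rw [h, smul_zero]⟩

end Polarization

/-- The sum of a function of three variables over the cyclic permutations of its arguments, the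
`∑` over `x → y → z → x` of Jacobi-type identities. -/
def cyclicSum {α M : Type*} [Add M] (f : α → α → α → M) (x y z : α) : M :=
  f x y z + f y z x + f z x y

section AntiPreLie

open LinearMap (BilinMap)

variable {R A : Type*} [CommRing R] [AddCommGroup A] [Module R A]

/-- The commutator `[x, y] = m x y - m y x` of a bilinear product `m`, as a linear function
of `m`. -/
def commutatorBracket : BilinMap R A A →ₗ[R] BilinMap R A A :=
  LinearMap.id - LinearMap.lflip.toLinearMap

theorem commutatorBracket_apply (m : BilinMap R A A) (x y : A) :
    commutatorBracket m x y = m x y - m y x :=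
  rfl

/-- An anti-pre-Lie product over an arbitrary commutative ring; over `ℂ` this is
`IsAntiPreLie`. -/
def IsAntiPreLieProduct (m : BilinMap R A A) : Prop :=
  (∀ x y z : A, m x (m y z) - m y (m x z) = m (m y x - m x y) z) ∧
  (∀ x y z : A, m (m x y - m y x) z + m (m y z - m z y) x + m (m z x - m x z) y = 0)

/-- The polarization `m x ∘ n y - m y ∘ n x + m [x, y]ₙ` of the first anti-pre-Lie identity, as a
bilinear function of the products `m` and `n`. For `m = n` it measures the failure of `-m` to be a
representation of the commutator bracket of `m`. -/
def antiRepDefect (x y : A) : BilinMap R (BilinMap R A A) (Module.End R A) :=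
  LinearMap.mk₂ R (fun m n ↦ m x ∘ₗ n y - m y ∘ₗ n x + m (commutatorBracket n x y))
    (fun _ _ _ ↦ by simp only [LinearMap.add_apply, LinearMap.add_comp]; abel)
    (fun _ _ _ ↦ by simp only [LinearMap.smul_apply, LinearMap.smul_comp]; module)
    (fun _ _ _ ↦ by simp only [map_add, LinearMap.add_apply, LinearMap.comp_add]; abel)
    (fun _ _ _ ↦ by simp only [map_smul, LinearMap.smul_apply, LinearMap.comp_smul]; module)

theorem antiRepDefect_apply (m n : BilinMap R A A) (x y : A) :
    antiRepDefect x y m n = m x ∘ₗ n y - m y ∘ₗ n x + m (commutatorBracket n x y) :=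
  rfl

/-- The action `m [x, y]ₙ z` of the `n`-commutator of `x` and `y` on `z`, as a bilinear function of
the products `m` and `n`. The second anti-pre-Lie identity is the vanishing of its cyclic sum for
`m = n`. -/
def commutatorAction (x y z : A) : BilinMap R (BilinMap R A A) A :=
  LinearMap.mk₂ R (fun m n ↦ m (commutatorBracket n x y) z)
    (fun _ _ _ ↦ by simp)
    (fun _ _ _ ↦ by simp)
    (fun _ _ _ ↦ by simp)
    (fun _ _ _ ↦ by simp)

theorem cyclicSum_commutatorAction_apply (m n : BilinMap R A A) (x y z : A) :
    cyclicSum commutatorAction x y z m n =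
      cyclicSum (fun x y z ↦ m (commutatorBracket n x y) z) x y z :=
  rfl

theorem isAntiPreLieProduct_iff_defects_eq_zero {m : BilinMap R A A} :
    IsAntiPreLieProduct m ↔
      (∀ x y, antiRepDefect x y m m = 0) ∧ ∀ x y z, cyclicSum commutatorAction x y z m m = 0 := by
  have antiRepDefect_self_eq_zero_iff (x y : A) :
      (∀ z, m x (m y z) - m y (m x z) = m (m y x - m x y) z) ↔ antiRepDefect x y m m = 0 := by
    simp only [antiRepDefect_apply, add_eq_zero_iff_eq_neg, ← map_neg, commutatorBracket_apply,
      neg_sub, LinearMap.ext_iff, LinearMap.sub_apply, LinearMap.comp_apply]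
  exact and_congr (forall₂_congr antiRepDefect_self_eq_zero_iff) Iff.rfl

/-- The polarized Jacobiator `[[x, y]ₙ, z]ₘ + [[y, z]ₙ, x]ₘ + [[z, x]ₙ, y]ₘ` of the commutators of
two products. -/
def commutatorJacobiator (m n : BilinMap R A A) : A → A → A → A :=
  cyclicSum fun x y z ↦ commutatorBracket m (commutatorBracket n x y) z

theorem two_smul_cyclicSum_commutatorAction (m n : BilinMap R A A) (x y z : A) :
    (2 : R) • cyclicSum commutatorAction x y z m n =
      commutatorJacobiator m n x y z + cyclicSum (fun x y z ↦ antiRepDefect x y m n z) x y z := by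
  rw [cyclicSum_commutatorAction_apply]
  simp only [commutatorJacobiator, cyclicSum, antiRepDefect_apply, commutatorBracket_apply,
    map_sub, LinearMap.sub_apply, LinearMap.add_apply, LinearMap.comp_apply]
  module

theorem forall_isAntiPreLieProduct_smul_add_smul_iff {c s : BilinMap R A A}
    (hc : IsAntiPreLieProduct c) (hs : IsAntiPreLieProduct s) :
    (∀ k₁ k₂ : R, IsAntiPreLieProduct (k₁ • c + k₂ • s)) ↔
      (∀ x y, antiRepDefect x y c s + antiRepDefect x y s c = 0) ∧
        ∀ x y z,
          cyclicSum commutatorAction x y z c s + cyclicSum commutatorAction x y z s c = 0 := by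
  rw [isAntiPreLieProduct_iff_defects_eq_zero] at hc hs
  have polarize_antiRepDefect (x y : A) :=
    forall_bilin_smul_add_smul_self_eq_zero_iff (antiRepDefect x y) (hc.1 x y) (hs.1 x y)
  have polarize_cyclicSum (x y z : A) :=
    forall_bilin_smul_add_smul_self_eq_zero_iff (cyclicSum commutatorAction x y z)
      (hc.2 x y z) (hs.2 x y z)
  simp only [isAntiPreLieProduct_iff_defects_eq_zero, ← polarize_antiRepDefect,
    ← polarize_cyclicSum, forall_and]
  exact and_congr ⟨fun h x y k₁ k₂ ↦ h k₁ k₂ x y, fun h k₁ k₂ x y ↦ h x y k₁ k₂⟩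
    ⟨fun h x y z k₁ k₂ ↦ h k₁ k₂ x y z, fun h k₁ k₂ x y z ↦ h x y z k₁ k₂⟩

theorem cyclicSum_commutatorAction_add_swap_eq_zero_iff (h2 : IsSMulRegular A (2 : R))
    {m n : BilinMap R A A} (h : ∀ x y, antiRepDefect x y m n + antiRepDefect x y n m = 0)
    (x y z : A) :
    cyclicSum commutatorAction x y z m n + cyclicSum commutatorAction x y z n m = 0 ↔
      commutatorJacobiator m n x y z + commutatorJacobiator n m x y z = 0 := by
  have defects_cancel : cyclicSum (fun x y z ↦ antiRepDefect x y m n z) x y z +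
      cyclicSum (fun x y z ↦ antiRepDefect x y n m z) x y z = 0 := by
    have h_apply (u v w : A) : antiRepDefect u v m n w = -antiRepDefect u v n m w := by
      rw [eq_neg_of_add_eq_zero_left (h u v), LinearMap.neg_apply]
    simp only [cyclicSum, h_apply]
    abel
  have two_smul_sum : (2 : R) • (cyclicSum commutatorAction x y z m n +
      cyclicSum commutatorAction x y z n m) =
        commutatorJacobiator m n x y z + commutatorJacobiator n m x y z := by
    rw [smul_add, two_smul_cyclicSum_commutatorAction, two_smul_cyclicSum_commutatorAction,
      add_add_add_comm, defects_cancel, add_zero]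
  rw [← two_smul_sum]
  exact ⟨fun sum_eq_zero ↦ by rw [sum_eq_zero, smul_zero], h2.right_eq_zero_of_smul⟩

theorem compatible_antiPreLie_iff_lieAdmissible_general (h2 : IsSMulRegular A (2 : R))
    (c s : A →ₗ[R] A →ₗ[R] A) (hc : IsAntiPreLieProduct c) (hs : IsAntiPreLieProduct s)
    (b₁ b₂ : A →ₗ[R] A →ₗ[R] A)
    (hb₁ : ∀ x y : A, b₁ x y = c x y - c y x)
    (hb₂ : ∀ x y : A, b₂ x y = s x y - s y x) :
    (∀ k₁ k₂ : R, IsAntiPreLieProduct (k₁ • c + k₂ • s)) ↔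
      ((∀ x y z : A,
          b₂ (b₁ x y) z + b₂ (b₁ y z) x + b₂ (b₁ z x) y
            + b₁ (b₂ x y) z + b₁ (b₂ y z) x + b₁ (b₂ z x) y = 0) ∧
       (∀ x y : A,
          -(c (b₂ x y)) - s (b₁ x y)
            = c x ∘ₗ s y - c y ∘ₗ s x + s x ∘ₗ c y - s y ∘ₗ c x)) := by
  obtain rfl : b₁ = commutatorBracket c := LinearMap.ext₂ hb₁
  obtain rfl : b₂ = commutatorBracket s := LinearMap.ext₂ hb₂
  rw [forall_isAntiPreLieProduct_smul_add_smul_iff hc hs, and_comm]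
  have operator_identity_iff (x y : A) :
      antiRepDefect x y c s + antiRepDefect x y s c = 0 ↔
        -(c (commutatorBracket s x y)) - s (commutatorBracket c x y)
          = c x ∘ₗ s y - c y ∘ₗ s x + s x ∘ₗ c y - s y ∘ₗ c x := by
    rw [antiRepDefect_apply, antiRepDefect_apply]
    constructor <;> intro h <;> linear_combination (norm := module) -h
  simp only [← operator_identity_iff]
  refine and_congr_left fun h ↦ forall₃_congr fun x y z ↦ ?_
  rw [cyclicSum_commutatorAction_add_swap_eq_zero_iff h2 h, add_comm]
  simp only [commutatorJacobiator, cyclicSum, add_assoc]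

end AntiPreLie

/-- For two anti-pre-Lie operations `∘ = c`, `∗ = s` on `A`, with
commutators `b₁, b₂`, `(A,∘,∗)` is a compatible anti-pre-Lie algebra iff
(a) `(A,b₁,b₂)` is a compatible Lie algebra (the mixed Jacobi identity holds), and
(b) `−L∘([x,y]₂) − L∗([x,y]₁) = L∘(x)L∗(y) − L∘(y)L∗(x) + L∗(x)L∘(y) − L∗(y)L∘(x)`
as operators on `A`. -/
theorem compatible_antiPreLie_iff_lieAdmissible {A : Type*} [AddCommGroup A] [Module ℂ A]
    (c s : A →ₗ[ℂ] A →ₗ[ℂ] A) (hc : IsAntiPreLie c) (hs : IsAntiPreLie s)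
    (b₁ b₂ : A →ₗ[ℂ] A →ₗ[ℂ] A)
    (hb₁ : ∀ x y : A, b₁ x y = c x y - c y x)
    (hb₂ : ∀ x y : A, b₂ x y = s x y - s y x) :
    (∀ k₁ k₂ : ℂ, IsAntiPreLie (k₁ • c + k₂ • s)) ↔
      ((∀ x y z : A,
          b₂ (b₁ x y) z + b₂ (b₁ y z) x + b₂ (b₁ z x) y
            + b₁ (b₂ x y) z + b₁ (b₂ y z) x + b₁ (b₂ z x) y = 0) ∧
       (∀ x y : A,
          -(c (b₂ x y)) - s (b₁ x y)
            = c x ∘ₗ s y - c y ∘ₗ s x + s x ∘ₗ c y - s y ∘ₗ c x)) :=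
  compatible_antiPreLie_iff_lieAdmissible_general (.of_ne_zero two_ne_zero)
    c s hc hs b₁ b₂ hb₁ hb₂
end

section
/- Let A be a complex vector space with two commutative bilinear operations ∘ and ∗ (i.e., x∘y = y∘x and x∗y = y∗x for all x,y ∈ A). Then (A,∘,∗) is a compatible anti-pre-Lie algebra if and only if (A,∘,∗) is a compatible associative algebra, that is, (A,∘) and (A,∗) are associative and (x∘y)∗z + (x∗y)∘z = x∘(y∗z) + x∗(y∘z) for all x,y,z ∈ A. -/
theorem left_comm_iff_assoc_of_comm {α : Type*} {m : α → α → α} (hm : ∀ x y, m x y = m y x) :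
    (∀ x y z, m x (m y z) = m y (m x z)) ↔ ∀ x y z, m (m x y) z = m x (m y z) := by
  constructor
  · intro h x y z
    calc m (m x y) z = m z (m x y) := hm _ _
      _ = m x (m z y) := h z x y
      _ = m x (m y z) := by rw [hm z y]
  · intro h x y z
    calc m x (m y z) = m (m x y) z := (h x y z).symm
      _ = m (m y x) z := by rw [hm x y]
      _ = m y (m x z) := h y x z

section Bilinear

variable {R A : Type*} [CommRing R] [AddCommGroup A] [Module R A]

/-- Anti-pre-Lie algebra structures over an arbitrary commutative ring `R`. For `R = ℂ` this unfolds
to the same proposition as `IsAntiPreLie`. -/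
def IsAntiPreLieOver (m : A →ₗ[R] A →ₗ[R] A) : Prop :=
  (∀ x y z : A, m x (m y z) - m y (m x z) = m (m y x - m x y) z) ∧
  (∀ x y z : A, m (m x y - m y x) z + m (m y z - m z y) x + m (m z x - m x z) y = 0)

theorem isAntiPreLieOver_iff_assoc_of_comm {m : A →ₗ[R] A →ₗ[R] A}
    (hm : ∀ x y, m x y = m y x) :
    IsAntiPreLieOver m ↔ ∀ x y z, m (m x y) z = m x (m y z) := by
  have commutator_eq_zero : ∀ x y, m x y - m y x = 0 := fun x y => sub_eq_zero.mpr (hm x y)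
  rw [← left_comm_iff_assoc_of_comm hm]
  simp [IsAntiPreLieOver, commutator_eq_zero, sub_eq_zero]

/-- The associator of a pair of bilinear products, where `x` is always multiplied by `c` and `z` by
`s`. It is bilinear in the pair, and `mixedAssociator m m` is the usual associator of `m`; its
symmetrization polarizes the associator as a quadratic function of the product. -/
def mixedAssociator (c s : A →ₗ[R] A →ₗ[R] A) (x y z : A) : A :=
  s (c x y) z - c x (s y z)

theorem mixedAssociator_self_eq_zero_iff (m : A →ₗ[R] A →ₗ[R] A) (x y z : A) :
    mixedAssociator m m x y z = 0 ↔ m (m x y) z = m x (m y z) :=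
  sub_eq_zero

theorem mixedAssociator_add_swap_eq_zero_iff (c s : A →ₗ[R] A →ₗ[R] A) (x y z : A) :
    mixedAssociator c s x y z + mixedAssociator s c x y z = 0 ↔
      s (c x y) z + c (s x y) z = c x (s y z) + s x (c y z) := by
  rw [mixedAssociator, mixedAssociator, sub_add_sub_comm, sub_eq_zero]

theorem mixedAssociator_smul_add_smul_self (c s : A →ₗ[R] A →ₗ[R] A) (k₁ k₂ : R) (x y z : A) :
    mixedAssociator (k₁ • c + k₂ • s) (k₁ • c + k₂ • s) x y z =
      k₁ ^ 2 • mixedAssociator c c x y z + k₂ ^ 2 • mixedAssociator s s x y z +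
        (k₁ * k₂) • (mixedAssociator c s x y z + mixedAssociator s c x y z) := by
  simp only [mixedAssociator, LinearMap.add_apply, LinearMap.smul_apply, map_add, map_smul]
  module

theorem sq_smul_add_sq_smul_add_mul_smul_eq_zero_iff (a b d : A) :
    (∀ k₁ k₂ : R, k₁ ^ 2 • a + k₂ ^ 2 • b + (k₁ * k₂) • d = 0) ↔ a = 0 ∧ b = 0 ∧ d = 0 := by
  constructor
  · intro h
    have ha : a = 0 := by simpa using h 1 0
    have hb : b = 0 := by simpa using h 0 1
    exact ⟨ha, hb, by simpa [ha, hb] using h 1 1⟩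
  · rintro ⟨rfl, rfl, rfl⟩ k₁ k₂
    simp

theorem forall_smul_add_smul_assoc_iff (c s : A →ₗ[R] A →ₗ[R] A) :
    (∀ (k₁ k₂ : R) (x y z : A), (k₁ • c + k₂ • s) ((k₁ • c + k₂ • s) x y) z =
        (k₁ • c + k₂ • s) x ((k₁ • c + k₂ • s) y z)) ↔
      ((∀ x y z, c (c x y) z = c x (c y z)) ∧
       (∀ x y z, s (s x y) z = s x (s y z)) ∧
       (∀ x y z, s (c x y) z + c (s x y) z = c x (s y z) + s x (c y z))) := by
  have coeffs_eq_zero_iff (x y z : A) := sq_smul_add_sq_smul_add_mul_smul_eq_zero_iff (R := R)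
    (mixedAssociator c c x y z) (mixedAssociator s s x y z)
    (mixedAssociator c s x y z + mixedAssociator s c x y z)
  simp only [← mixedAssociator_smul_add_smul_self, mixedAssociator_self_eq_zero_iff,
    mixedAssociator_add_swap_eq_zero_iff] at coeffs_eq_zero_iff
  simp only [← forall_and, ← coeffs_eq_zero_iff]
  exact ⟨fun h x y z k₁ k₂ => h k₁ k₂ x y z, fun h k₁ k₂ x y z => h x y z k₁ k₂⟩

theorem commutative_compatible_antiPreLie_iff_assoc_general (c s : A →ₗ[R] A →ₗ[R] A)
    (hc : ∀ x y : A, c x y = c y x) (hs : ∀ x y : A, s x y = s y x) :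
    (∀ k₁ k₂ : R, IsAntiPreLieOver (k₁ • c + k₂ • s)) ↔
      ((∀ x y z : A, c (c x y) z = c x (c y z)) ∧
       (∀ x y z : A, s (s x y) z = s x (s y z)) ∧
       (∀ x y z : A, s (c x y) z + c (s x y) z = c x (s y z) + s x (c y z))) := by
  have pencil_comm (k₁ k₂ : R) (x y : A) :
      (k₁ • c + k₂ • s) x y = (k₁ • c + k₂ • s) y x := by
    simp only [LinearMap.add_apply, LinearMap.smul_apply, hc x y, hs x y]
  rw [← forall_smul_add_smul_assoc_iff]
  exact forall₂_congr fun k₁ k₂ => isAntiPreLieOver_iff_assoc_of_comm (pencil_comm k₁ k₂)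

end Bilinear

/-- If the two bilinear operations `∘ = c` and `∗ = s` on `A` are both
commutative, then `(A,∘,∗)` is a compatible anti-pre-Lie algebra iff `(A,∘,∗)` is a
compatible associative algebra: both operations are associative and
`(x∘y)∗z + (x∗y)∘z = x∘(y∗z) + x∗(y∘z)`. -/
theorem commutative_compatible_antiPreLie_iff_assoc {A : Type*} [AddCommGroup A]
    [Module ℂ A] (c s : A →ₗ[ℂ] A →ₗ[ℂ] A)
    (hc : ∀ x y : A, c x y = c y x) (hs : ∀ x y : A, s x y = s y x) :
    (∀ k₁ k₂ : ℂ, IsAntiPreLie (k₁ • c + k₂ • s)) ↔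
      ((∀ x y z : A, c (c x y) z = c x (c y z)) ∧
       (∀ x y z : A, s (s x y) z = s x (s y z)) ∧
       (∀ x y z : A, s (c x y) z + c (s x y) z = c x (s y z) + s x (c y z))) :=
  commutative_compatible_antiPreLie_iff_assoc_general c s hc hs
end

section
/- Let A be a complex vector space, B a symmetric bilinear form on A, and s₁, s₂ ∈ A fixed vectors. Define x∘y = B(x,y)s₁ − B(x,s₁)y and x∗y = B(x,y)s₂ − B(x,s₂)y. Then B is invariant on (A,∘,∗): B(x∘y, z) = B(y, x∘z − z∘x) and B(x∗y, z) = B(y, x∗z − z∗x) for all x,y,z ∈ A; consequently B is a commutative 2-cocycle on each of the commutator Lie brackets [x,y]₁ = x∘y−y∘x and [x,y]₂ = x∗y−y∗x, i.e., B([x,y]ᵢ,z) + B([y,z]ᵢ,x) + B([z,x]ᵢ,y) = 0 for i = 1,2. -/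
/-!
For symmetric `B` the multiples of `s` cancel in the commutator of `x ∘ y = B(x, y) s - B(x, s) y`,
leaving `[x, y] = B(y, s) x - B(x, s) y`. Pairing `[x, z]` with `y` gives `B(x ∘ y, z)`, which is
invariance. The cocycle identity uses only the shape `[x, y] = f(y) x - f(x) y` of the bracket: in
the cyclic sum each product `f(x) B(y, z)` occurs twice, with opposite signs. Deducing it from
invariance alone would only show that three times the cyclic sum vanishes.
-/

open LinearMap (BilinForm)

section CommRing

variable {R A : Type*} [CommRing R] [AddCommGroup A] [Module R A]

/-- Invariance of a bilinear form under an operation `m` on its space, in the sense used for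
anti-pre-Lie algebras. The operation is a bare function, as bilinearity plays no part in the
notion. -/
def IsInvariantForm (B : BilinForm R A) (m : A → A → A) : Prop :=
  ∀ x y z, B (m x y) z = B y (m x z - m z x)

/-- Commutative 2-cocycles on a bracket `br`, which is given as a bare function and need not be
a Lie bracket. -/
structure IsCommTwoCocycle (B : BilinForm R A) (br : A → A → A) : Prop where
  isSymm : B.IsSymm
  cyclic_sum_eq_zero : ∀ x y z, B (br x y) z + B (br y z) x + B (br z x) y = 0

/-- The operation `x ∘ y = B(x, y) s - B(x, s) y` attached to a bilinear form `B` and a vector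
`s`. -/
def formMul (B : BilinForm R A) (s x y : A) : A :=
  B x y • s - B x s • y

theorem isCommTwoCocycle_smul_sub_smul {B : BilinForm R A} (hB : B.IsSymm) (f : A → R) :
    IsCommTwoCocycle B fun x y => f y • x - f x • y where
  isSymm := hB
  cyclic_sum_eq_zero x y z := by
    simp only [map_sub, map_smul, LinearMap.sub_apply, LinearMap.smul_apply, smul_eq_mul]
    rw [hB.eq y x, hB.eq z x, hB.eq z y]
    ring

theorem formMul_sub_formMul_swap {B : BilinForm R A} (hB : B.IsSymm) (s x y : A) :
    formMul B s x y - formMul B s y x = B y s • x - B x s • y := by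
  rw [formMul, formMul, hB.eq y x]
  abel

theorem isInvariantForm_formMul {B : BilinForm R A} (hB : B.IsSymm) (s : A) :
    IsInvariantForm B (formMul B s) := fun x y z =>
  calc
    B (formMul B s x y) z = B x y * B s z - B x s * B y z := by simp [formMul]
    _ = B z s * B y x - B x s * B y z := by rw [hB.eq x y, hB.eq s z, mul_comm (B y x)]
    _ = B y (B z s • x - B x s • z) := by simp
    _ = B y (formMul B s x z - formMul B s z x) := by rw [formMul_sub_formMul_swap hB]

theorem isCommTwoCocycle_formMul_sub_formMul_swap {B : BilinForm R A} (hB : B.IsSymm) (s : A) :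
    IsCommTwoCocycle B fun x y => formMul B s x y - formMul B s y x := by
  simpa only [formMul_sub_formMul_swap hB] using isCommTwoCocycle_smul_sub_smul hB (B · s)

theorem bilinear_form_invariant_and_two_cocycle_general {B : BilinForm R A} (hB : B.IsSymm)
    {s : A} {m : A → A → A} (hm : ∀ x y, m x y = B x y • s - B x s • y) :
    IsInvariantForm B m ∧ IsCommTwoCocycle B fun x y => m x y - m y x := by
  obtain rfl : m = formMul B s := funext₂ hm
  exact ⟨isInvariantForm_formMul hB s, isCommTwoCocycle_formMul_sub_formMul_swap hB s⟩

end CommRing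

/-- Let `B` be a symmetric bilinear form on a complex vector space `A`
and `s₁ s₂ ∈ A`, with `x∘y = B(x,y)s₁ − B(x,s₁)y` and `x∗y = B(x,y)s₂ − B(x,s₂)y`.
Then `B` is invariant on `(A,∘,∗)`: `B(x∘y,z) = B(y, x∘z − z∘x)` and
`B(x∗y,z) = B(y, x∗z − z∗x)`; consequently `B` is a commutative 2-cocycle on each of
the commutator brackets `[x,y]₁ = x∘y−y∘x` and `[x,y]₂ = x∗y−y∗x`. -/
theorem bilinear_form_invariant_and_two_cocycle {A : Type*} [AddCommGroup A]
    [Module ℂ A] (B : A →ₗ[ℂ] A →ₗ[ℂ] ℂ)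
    (hsym : ∀ x y : A, B x y = B y x) (s₁ s₂ : A)
    (c st : A → A → A)
    (hc : ∀ x y : A, c x y = B x y • s₁ - B x s₁ • y)
    (hst : ∀ x y : A, st x y = B x y • s₂ - B x s₂ • y) :
    (∀ x y z : A, B (c x y) z = B y (c x z - c z x)) ∧
    (∀ x y z : A, B (st x y) z = B y (st x z - st z x)) ∧
    (∀ x y z : A,
      B (c x y - c y x) z + B (c y z - c z y) x + B (c z x - c x z) y = 0) ∧
    (∀ x y z : A,
      B (st x y - st y x) z + B (st y z - st z y) x + B (st z x - st x z) y = 0) := by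
  have ⟨inv₁, cocycle₁⟩ := bilinear_form_invariant_and_two_cocycle_general ⟨hsym⟩ hc
  have ⟨inv₂, cocycle₂⟩ := bilinear_form_invariant_and_two_cocycle_general ⟨hsym⟩ hst
  exact ⟨inv₁, inv₂, cocycle₁.cyclic_sum_eq_zero, cocycle₂.cyclic_sum_eq_zero⟩
end
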